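/- Coefficient form of the multiset-of-two functional equation A(z) = (B(z)² + B(z²))/2: let ℬ be a type with a size function s : ℬ → ℕ all of whose fibers are finite, and set bₙ := card {β : ℬ | s β = n}. Give Sym2 ℬ the size function sending the unordered pair {β₁,β₂} to s β₁ + s β₂; its fibers are then finite, and set aₙ := card {p : Sym2 ℬ | size p = n}. Then for every n ∈ ℕ, 2·aₙ = (∑_{i=0}^{n} b_i · b_{n−i}) + (if n is even then b_{n/2} else 0). -/

import Mathlib

/-- The size of an unordered pair: the sum of the sizes of its two components. -/
def sym2Size {ℬ : Type*} (s : ℬ → ℕ) : Sym2 ℬ → ℕ :=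
  Sym2.lift ⟨fun x y => s x + s y, fun x y => add_comm (s x) (s y)⟩

/-- **Coefficient form of `A(z) = (B(z)² + B(z²))/2` for `MSet₂`.**
If `s : ℬ → ℕ` has finite fibers and `bₙ` counts elements of size `n`, then the fibers
of the induced size on `Sym2 ℬ` are finite and, writing `aₙ` for the number of
unordered pairs of total size `n`,
`2·aₙ = (∑_{i=0}^{n} b_i b_{n−i}) + (if n even then b_{n/2} else 0)`. -/
theorem msets2_coefficient_identity
    {ℬ : Type*} (s : ℬ → ℕ) (hfin : ∀ n : ℕ, {β : ℬ | s β = n}.Finite) :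
    (∀ n : ℕ, {p : Sym2 ℬ | sym2Size s p = n}.Finite) ∧
      ∀ n : ℕ,
        2 * Nat.card {p : Sym2 ℬ // sym2Size s p = n} =
          (∑ i ∈ Finset.range (n + 1),
            Nat.card {β : ℬ // s β = i} * Nat.card {β : ℬ // s β = n - i}) +
          (if Even n then Nat.card {β : ℬ // s β = n / 2} else 0) := by
  classical
  have hF : ∀ n : ℕ, {β : ℬ | s β ≤ n}.Finite := by
    intro n
    have h : {β : ℬ | s β ≤ n} = ⋃ i ∈ Finset.range (n + 1), {β : ℬ | s β = i} := by
      ext x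
      simp [Nat.lt_succ_iff]
    rw [h]
    exact Set.Finite.biUnion (Finset.finite_toSet _) (fun i _ => hfin i)
  have hP : ∀ n : ℕ, ∃ F : Finset ℬ, ∀ x, x ∈ F ↔ s x ≤ n := by
    intro n
    exact ⟨(hF n).toFinset, fun x => by simp⟩
  have key : ∀ n : ℕ, ∀ F : Finset ℬ, (∀ x, x ∈ F ↔ s x ≤ n) →
      ∀ p : Sym2 ℬ, p ∈ ((F ×ˢ F).filter (fun q => s q.1 + s q.2 = n)).image
        (fun q => s(q.1, q.2)) ↔ sym2Size s p = n := by
    intro n F hFm p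
    induction p using Sym2.ind with
    | _ a b =>
      simp only [Finset.mem_image, Finset.mem_filter, Finset.mem_product, hFm]
      constructor
      · rintro ⟨q, ⟨_, h⟩, h2⟩
        rw [← h2]
        exact h
      · intro h
        have h' : s a + s b = n := h
        exact ⟨(a, b), ⟨⟨by dsimp only; omega, by dsimp only; omega⟩, h'⟩, rfl⟩
  have cardb : ∀ n : ℕ, ∀ F : Finset ℬ, (∀ x, x ∈ F ↔ s x ≤ n) → ∀ i ≤ n,
      Nat.card {β : ℬ // s β = i} = (F.filter (fun x => s x = i)).card := by
    intro n F hFm i hi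
    apply Nat.subtype_card
    intro x
    simp only [Finset.mem_filter, hFm]
    omega
  constructor
  · intro n
    obtain ⟨F, hFm⟩ := hP n
    refine (Finset.finite_toSet (((F ×ˢ F).filter (fun q => s q.1 + s q.2 = n)).image
        (fun q => s(q.1, q.2)))).subset ?_
    intro p hp
    exact (key n F hFm p).2 hp
  · intro n
    obtain ⟨F, hFm⟩ := hP n
    have hk := key n F hFm
    rw [Nat.subtype_card _ hk]
    set T := (F ×ˢ F).filter (fun q => s q.1 + s q.2 = n) with hT
    set P := T.image (fun q => s(q.1, q.2)) with hPdef
    have h1 : T.card = ∑ i ∈ Finset.range (n + 1),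
            Nat.card {β : ℬ // s β = i} * Nat.card {β : ℬ // s β = n - i} := by
      rw [Finset.card_eq_sum_card_fiberwise (f := fun q => s q.1) (t := Finset.range (n + 1))]
      · apply Finset.sum_congr rfl
        intro i hi
        have hi' : i ≤ n := by simpa [Nat.lt_succ_iff] using hi
        rw [cardb n F hFm i hi', cardb n F hFm (n - i) (Nat.sub_le _ _), ← Finset.card_product]
        congr 1
        ext ⟨x, y⟩
        simp only [hT, Finset.mem_filter, Finset.mem_product, hFm]
        omega
      · intro q hq
        have hq' : q ∈ T := hq
        simp only [hT, Finset.mem_filter, Finset.mem_product, hFm] at hq'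
        simp only [Finset.coe_range, Set.mem_Iio]
        omega
    set D := F.filter (fun x => s x + s x = n) with hD
    have h2 : D.card = if Even n then Nat.card {β : ℬ // s β = n / 2} else 0 := by
      split_ifs with he
      · rw [cardb n F hFm (n / 2) (Nat.div_le_self _ _)]
        congr 1
        ext x
        obtain ⟨k, hk⟩ := he
        simp only [hD, Finset.mem_filter, hFm]
        omega
      · rw [Finset.card_eq_zero, hD, Finset.filter_eq_empty_iff]
        intro x _ h
        exact he ⟨s x, h.symm⟩
    rw [← h1, ← h2]
    rw [Finset.card_eq_sum_card_fiberwise (s := T) (f := fun q => s(q.1, q.2)) (t := P)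
        (fun q hq => Finset.mem_coe.2 (Finset.mem_image_of_mem _ hq)),
      Finset.card_eq_sum_card_fiberwise (s := D) (f := fun x => s(x, x)) (t := P)
        (fun x hx => Finset.mem_coe.2 ((hk _).2 (Finset.mem_filter.1 hx).2)),
      ← Finset.sum_add_distrib, mul_comm, ← smul_eq_mul, ← Finset.sum_const]
    apply Finset.sum_congr rfl
    intro p hp
    rw [hk] at hp
    induction p using Sym2.ind with
    | _ a b =>
      have hab : s a + s b = n := hp
      have e1 : T.filter (fun q => s(q.1, q.2) = s(a, b)) = {(a, b), (b, a)} := by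
        ext ⟨x, y⟩
        simp only [hT, Finset.mem_filter, Finset.mem_product, hFm, Sym2.eq_iff,
          Finset.mem_insert, Finset.mem_singleton, Prod.mk.injEq]
        constructor
        · exact fun h => h.2
        · rintro (⟨rfl, rfl⟩ | ⟨rfl, rfl⟩)
          · exact ⟨⟨⟨by omega, by omega⟩, by omega⟩, Or.inl ⟨rfl, rfl⟩⟩
          · exact ⟨⟨⟨by omega, by omega⟩, by omega⟩, Or.inr ⟨rfl, rfl⟩⟩
      rw [e1]
      by_cases h : a = b
      · subst h
        have e2 : D.filter (fun x => s(x, x) = s(a, a)) = {a} := by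
          ext x
          simp only [hD, Finset.mem_filter, hFm, Sym2.eq_iff, Finset.mem_singleton]
          constructor
          · rintro ⟨_, h | h⟩ <;> exact h.1
          · rintro rfl
            exact ⟨⟨by omega, hab⟩, Or.inl ⟨rfl, rfl⟩⟩
        rw [e2]
        simp
      · have e2 : D.filter (fun x => s(x, x) = s(a, b)) = ∅ := by
          rw [Finset.filter_eq_empty_iff]
          intro x _ hx
          rw [Sym2.eq_iff] at hx
          rcases hx with hx | hx
          · exact h (hx.1.symm.trans hx.2)
          · exact h (hx.2.symm.trans hx.1)
        rw [e2, Finset.card_pair]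
        · simp
        · intro hh
          exact h (Prod.mk.inj hh).1
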